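/- Assume k is algebraically closed and m ≤ n. Let E be a set of pairwise non-proportional homogeneous linear forms in S that is generic, i.e. every subset of E with at most n elements is linearly independent, and suppose each Q_j ∈ 𝒜 is a product of (powers of) elements of E. Then the Taylor complex of 𝒜 is a resolution of S/I. -/

import Mathlib

open Finset

noncomputable section

/-- Degree-`p` term of the Taylor complex: the free `S`-module on the `p`-element
subsets of the index set `Fin m`. -/
abbrev TaylorMod (k : Type) [Field k] (n m p : ℕ) : Type :=
  {σ : Finset (Fin m) // σ.card = p} →₀ MvPolynomial (Fin n) k

/-- The Taylor differential, sending a `p`-element subset `σ` to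
`∑_{i ∈ σ} (-1)^{ε(σ,i)} (Q_σ / Q_{σ∖{i}}) (σ∖{i})`, where `c σ i` is the quotient
`Q_σ / Q_{σ∖{i}}`. -/
def taylorD (k : Type) [Field k] (n m : ℕ)
    (c : Finset (Fin m) → Fin m → MvPolynomial (Fin n) k) (p : ℕ) :
    TaylorMod k n m p →ₗ[MvPolynomial (Fin n) k] TaylorMod k n m (p - 1) :=
  Finsupp.lsum (MvPolynomial (Fin n) k) fun σ =>
    LinearMap.toSpanSingleton _ _
      (∑ i ∈ σ.1.attach,
        Finsupp.single
          ⟨σ.1.erase i.1, by rw [Finset.card_erase_of_mem i.2, σ.2]⟩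
          ((-1) ^ (σ.1.filter (fun j => j < i.1)).card * c σ.1 i.1))

/-- The identification of the degree-`0` term of the Taylor complex with `S`. -/
def taylorAug (k : Type) [Field k] (n m : ℕ) :
    TaylorMod k n m 0 →ₗ[MvPolynomial (Fin n) k] MvPolynomial (Fin n) k :=
  Finsupp.lsum (MvPolynomial (Fin n) k) fun _ => LinearMap.id

/-- The Taylor complex (built from the quotient data `c`) is a resolution of `S/I`:
it is exact in all degrees `p ≥ 1` and the image of its first differential is the
ideal generated by `Q`. -/
def IsTaylorResolution (k : Type) [Field k] (n m : ℕ) (Q : Fin m → MvPolynomial (Fin n) k)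
    (c : Finset (Fin m) → Fin m → MvPolynomial (Fin n) k) : Prop :=
  (∀ p : ℕ, 1 ≤ p →
      LinearMap.ker (taylorD k n m c p) = LinearMap.range (taylorD k n m c (p + 1))) ∧
  Submodule.map (taylorAug k n m) (LinearMap.range (taylorD k n m c 1)) =
    Ideal.span (Set.range Q)

end

/-!
If any `N` members of a family are regular in every order, then monomials in the family behave like
monomials in variables as long as fewer than `N` generators are involved: the colon of a monomial
ideal by a member `z t` removes one factor `z t` from each generator divisible by it. Hence, for at
most `N` monomials `Q i`, intersections of the ideals `(Q i)` distribute over sums of the others.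

Sending `σ` to `L σ • σ` identifies the Taylor complex with the simplicial chains whose coefficient
at `σ` lies in `⋂ i ∈ σ, (Q i)`. For a distributive family of ideals these are exact: cone off the
smallest vertex and induct. Linearly independent linear forms become variables after a linear change
of coordinates, so generic linear forms are such a family.
-/

section Boundary

variable {κ M : Type*} [LinearOrder κ] [AddCommGroup M]

/-- The simplicial boundary of the full simplex on `s`, with chains encoded as functions on all
finite sets of vertices: `boundary s g τ` is the coefficient of `τ` in the boundary of
`∑ σ ⊆ s, g σ • σ`, and depends only on the values `g σ` at `σ ⊆ s` when `τ ⊆ s`. -/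
def boundary (s : Finset κ) : (Finset κ → M) →+ (Finset κ → M) where
  toFun g τ := ∑ i ∈ s \ τ, (-1 : ℤ) ^ #{j ∈ τ | j < i} • g (insert i τ)
  map_zero' := by ext; simp
  map_add' g h := by ext; simp [sum_add_distrib]

lemma boundary_apply (s : Finset κ) (g : Finset κ → M) (τ : Finset κ) :
    boundary s g τ = ∑ i ∈ s \ τ, (-1 : ℤ) ^ #{j ∈ τ | j < i} • g (insert i τ) := rfl

lemma boundary_empty_apply (s : Finset κ) (g : Finset κ → M) :
    boundary s g ∅ = ∑ i ∈ s, g {i} := by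
  simp [boundary_apply]

lemma boundary_congr {s τ : Finset κ} {g h : Finset κ → M}
    (hgh : ∀ i ∈ s \ τ, g (insert i τ) = h (insert i τ)) : boundary s g τ = boundary s h τ :=
  sum_congr rfl fun i hi => by rw [hgh i hi]

lemma boundary_insert {l : κ} {s τ : Finset κ} (hl : ∀ i ∈ s, l < i) (hτ : τ ⊆ s)
    (g : Finset κ → M) : boundary (insert l s) g τ = g (insert l τ) + boundary s g τ := by
  have hlτ : l ∉ τ := fun h => (hl l (hτ h)).false
  have hls : l ∉ s \ τ := fun h => (hl l (mem_sdiff.1 h).1).false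
  have hlt : #{j ∈ τ | j < l} = 0 := by
    simpa [filter_eq_empty_iff] using fun j hj => (hl j (hτ hj)).le
  rw [boundary_apply, insert_sdiff_of_notMem _ hlτ, sum_insert hls, hlt, pow_zero, one_smul,
    boundary_apply]

lemma boundary_insert_insert {l : κ} {s τ : Finset κ} (hl : ∀ i ∈ s, l < i) (hτ : τ ⊆ s)
    (g : Finset κ → M) :
    boundary (insert l s) g (insert l τ) = -boundary s (fun σ => g (insert l σ)) τ := by
  have hls : l ∉ s := fun h => (hl l h).false
  rw [boundary_apply, boundary_apply, insert_sdiff_insert, sdiff_insert_of_notMem hls,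
    ← sum_neg_distrib]
  refine sum_congr rfl fun i hi => ?_
  have hlt : #{j ∈ insert l τ | j < i} = #{j ∈ τ | j < i} + 1 := by
    rw [filter_insert, if_pos (hl i (mem_sdiff.1 hi).1), card_insert_of_notMem]
    exact fun h => hls (hτ (mem_filter.1 h).1)
  rw [hlt, pow_succ, mul_neg_one, neg_smul, insert_comm]

lemma forall_subset_insert {α : Type*} [DecidableEq α] {s : Finset α} {l : α}
    {P : Finset α → Prop} :
    (∀ τ ⊆ insert l s, P τ) ↔ ∀ τ ⊆ s, P τ ∧ P (insert l τ) := by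
  simp only [← mem_powerset, powerset_insert, forall_mem_union, forall_mem_image, forall_and]

theorem boundary_boundary {s τ : Finset κ} (hτ : τ ⊆ s) (g : Finset κ → M) :
    boundary s (boundary s g) τ = 0 := by
  induction s using induction_on_min generalizing τ g with
  | empty => simp [boundary_apply]
  | insert l s hl ih =>
    revert τ
    rw [forall_subset_insert]
    intro τ hτ
    have hins {i} (hi : i ∈ s \ τ) : insert i τ ⊆ s := insert_subset (mem_sdiff.1 hi).1 hτ
    constructor
    · have hsum : boundary s (boundary (insert l s) g) τ =
          boundary s ((fun σ => g (insert l σ)) + boundary s g) τ :=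
        boundary_congr fun i hi => boundary_insert hl (hins hi) g
      rw [boundary_insert hl hτ, boundary_insert_insert hl hτ, hsum, map_add, Pi.add_apply,
        ih hτ, add_zero, neg_add_cancel]
    · have hneg : boundary s (fun σ => boundary (insert l s) g (insert l σ)) τ =
          boundary s (-boundary s fun σ => g (insert l σ)) τ :=
        boundary_congr fun i hi => boundary_insert_insert hl (hins hi) g
      rw [boundary_insert_insert hl hτ, hneg, map_neg, Pi.neg_apply, ih hτ, neg_zero, neg_zero]

/-- The chain `h₂ - l * h₁`, where `l * h₁` is the cone over `h₁` with apex `l`. -/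
def subCone (l : κ) (h₁ h₂ : Finset κ → M) (σ : Finset κ) : M :=
  if l ∈ σ then -h₁ (σ.erase l) else h₂ σ

lemma subCone_of_notMem {l : κ} {σ : Finset κ} (hl : l ∉ σ) (h₁ h₂ : Finset κ → M) :
    subCone l h₁ h₂ σ = h₂ σ := if_neg hl

lemma subCone_insert {l : κ} {σ : Finset κ} (hl : l ∉ σ) (h₁ h₂ : Finset κ → M) :
    subCone l h₁ h₂ (insert l σ) = -h₁ σ := by
  rw [subCone, if_pos (mem_insert_self _ _), erase_insert hl]

lemma boundary_subCone {l : κ} {s τ : Finset κ} (hl : ∀ i ∈ s, l < i) (hτ : τ ⊆ s)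
    (h₁ h₂ : Finset κ → M) :
    boundary (insert l s) (subCone l h₁ h₂) τ = boundary s h₂ τ - h₁ τ := by
  have hls : l ∉ s := fun h => (hl l h).false
  have hcongr : boundary s (subCone l h₁ h₂) τ = boundary s h₂ τ := boundary_congr fun i hi =>
    subCone_of_notMem (fun h => hls (insert_subset (mem_sdiff.1 hi).1 hτ h)) _ _
  rw [boundary_insert hl hτ, subCone_insert fun h => hls (hτ h), hcongr, neg_add_eq_sub]

lemma boundary_subCone_insert {l : κ} {s τ : Finset κ} (hl : ∀ i ∈ s, l < i) (hτ : τ ⊆ s)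
    (h₁ h₂ : Finset κ → M) :
    boundary (insert l s) (subCone l h₁ h₂) (insert l τ) = boundary s h₁ τ := by
  have hls : l ∉ s := fun h => (hl l h).false
  have hcongr : boundary s (fun σ => subCone l h₁ h₂ (insert l σ)) τ = boundary s (-h₁) τ :=
    boundary_congr fun i hi =>
      subCone_insert (fun h => hls (insert_subset (mem_sdiff.1 hi).1 hτ h)) _ _
  rw [boundary_insert_insert hl hτ, hcongr, map_neg, Pi.neg_apply, neg_neg]

end Boundary

section Distributive

variable {R M κ : Type*} [Ring R] [AddCommGroup M] [Module R M] {N : κ → Submodule R M}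

/-- A family of submodules in which intersections of members distribute over sums of other
members; the reverse inclusion always holds. -/
def IsDistributiveFamily (N : κ → Submodule R M) : Prop :=
  ∀ σ s : Finset κ, Disjoint σ s →
    (⨅ i ∈ σ, N i) ⊓ ⨆ j ∈ s, N j ≤ ⨆ j ∈ s, (⨅ i ∈ σ, N i) ⊓ N j

variable [LinearOrder κ] {ρ s : Finset κ}

/-- The `#σ = p` part of the complex on the simplex `s` in which the face `σ` has coefficients in
`⨅ i ∈ ρ ∪ σ, N i`. -/
def IsInterChain (N : κ → Submodule R M) (ρ s : Finset κ) (p : ℕ) (g : Finset κ → M) : Prop :=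
  ∀ σ ⊆ s, #σ = p → ∀ i ∈ ρ ∪ σ, g σ ∈ N i

lemma IsDistributiveFamily.exists_boundary_empty_eq (hN : IsDistributiveFamily N)
    (hρs : Disjoint ρ s) {x : M} (hxρ : ∀ i ∈ ρ, x ∈ N i) (hxs : x ∈ ⨆ i ∈ s, N i) :
    ∃ h, IsInterChain N ρ s 1 h ∧ boundary s h ∅ = x := by
  have hx : x ∈ ⨆ j ∈ s, (⨅ i ∈ ρ, N i) ⊓ N j := hN ρ s hρs ⟨by simpa using hxρ, hxs⟩
  obtain ⟨w, hw⟩ := (Submodule.mem_iSup_finset_iff_exists_sum _ _).1 hx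
  refine ⟨fun σ => ∑ i ∈ σ, w i, ?_, ?_⟩
  · intro σ _ hσ i hi
    obtain ⟨j, rfl⟩ := card_eq_one.1 hσ
    obtain ⟨hwρ, hwj⟩ := (w j).2
    simp_rw [sum_singleton]
    obtain hi | hi := mem_union.1 hi
    · exact (Submodule.mem_finsetInf.1 (by simpa using hwρ)) i hi
    · rwa [mem_singleton.1 hi]
  · simpa [boundary_empty_apply] using hw

lemma IsInterChain.subCone {l : κ} {p : ℕ} {h₁ h₂ : Finset κ → M} (hl : l ∉ s)
    (hh₁ : IsInterChain N (insert l ρ) s p h₁) (hh₂ : IsInterChain N ρ s (p + 1) h₂) :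
    IsInterChain N ρ (insert l s) (p + 1) (subCone l h₁ h₂) := by
  refine forall_subset_insert.2 fun σ hσ => ?_
  have hlσ : l ∉ σ := fun h => hl (hσ h)
  rw [subCone_of_notMem hlσ, subCone_insert hlσ, card_insert_of_notMem hlσ, add_left_inj,
    union_insert, ← insert_union]
  exact ⟨hh₂ σ hσ, fun hcard i hi => neg_mem (hh₁ σ hσ hcard i hi)⟩

lemma IsInterChain.link {l : κ} {p : ℕ} {g : Finset κ → M} (hl : l ∉ s)
    (hg : IsInterChain N ρ (insert l s) (p + 1) g) :
    IsInterChain N (insert l ρ) s p fun σ => g (insert l σ) := fun σ hσ hp => by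
  rw [insert_union, ← union_insert]
  exact hg _ (insert_subset_insert l hσ) (by rw [card_insert_of_notMem fun h => hl (hσ h), hp])

lemma IsInterChain.mem_iSup_of_boundary_eq_zero {l : κ} {g : Finset κ → M} (hl : l ∉ s)
    (hg : IsInterChain N ρ (insert l s) 1 g) (hcycle : boundary (insert l s) g ∅ = 0) :
    g {l} ∈ ⨆ i ∈ s, N i := by
  rw [boundary_empty_apply, sum_insert hl] at hcycle
  rw [eq_neg_of_add_eq_zero_left hcycle]
  refine neg_mem (sum_mem fun i hi => Submodule.mem_iSup_of_mem i (Submodule.mem_iSup_of_mem hi ?_))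
  exact hg {i} (by simp [hi]) (card_singleton i) i (by simp)

/-- Cone off the smallest vertex `l`: a primitive of the link of `l` over `insert l ρ` makes the
part of the cycle avoiding `l` a cycle on `s`. -/
theorem IsDistributiveFamily.exists_boundary_eq (hN : IsDistributiveFamily N)
    (hρs : Disjoint ρ s) {p : ℕ} {g : Finset κ → M} (hg : IsInterChain N ρ s (p + 1) g)
    (hcycle : ∀ τ ⊆ s, #τ = p → boundary s g τ = 0) :
    ∃ h, IsInterChain N ρ s (p + 2) h ∧ ∀ τ ⊆ s, #τ = p + 1 → boundary s h τ = g τ := by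
  induction s using induction_on_min generalizing ρ p g with
  | empty => exact ⟨0, fun _ _ _ _ _ => zero_mem _, fun τ hτ => by simp [subset_empty.1 hτ]⟩
  | insert l s hl ih =>
    have hls : l ∉ s := fun h => (hl l h).false
    have hρs' : Disjoint ρ s := (disjoint_insert_right.1 hρs).2
    have hlρs : Disjoint (insert l ρ) s := disjoint_insert_left.2 ⟨hls, hρs'⟩
    have hcard {τ : Finset κ} (hτ : τ ⊆ s) : #(insert l τ) = #τ + 1 :=
      card_insert_of_notMem fun h => hls (hτ h)
    have hsplit : ∀ τ ⊆ s, #τ = p → g (insert l τ) + boundary s g τ = 0 := fun τ hτ hp => by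
      rw [← boundary_insert hl hτ, hcycle τ (hτ.trans (subset_insert _ _)) hp]
    obtain ⟨h₁, hh₁, hbd₁⟩ : ∃ h₁, IsInterChain N (insert l ρ) s (p + 1) h₁ ∧
        ∀ τ ⊆ s, #τ = p → boundary s h₁ τ = g (insert l τ) := by
      cases p with
      | zero =>
        have hgl := hg.mem_iSup_of_boundary_eq_zero hls (hcycle ∅ (empty_subset _) rfl)
        obtain ⟨h₁, hh₁, hbd₁⟩ :=
          hN.exists_boundary_empty_eq hlρs (by simpa using hg {l} (by simp) rfl) hgl
        exact ⟨h₁, hh₁, fun τ _ hτ => by rw [card_eq_zero.1 hτ, hbd₁, insert_empty_eq]⟩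
      | succ q =>
        refine ih hlρs (hg.link hls) fun τ hτ hq => ?_
        rw [← neg_eq_zero, ← boundary_insert_insert hl hτ]
        exact hcycle _ (insert_subset_insert l hτ) (by rw [hcard hτ, hq])
    have hsum : IsInterChain N ρ s (p + 1) (g + h₁) := fun σ hσ hp i hi =>
      add_mem (hg σ (hσ.trans (subset_insert _ _)) hp i hi)
        (hh₁ σ hσ hp i (insert_union l ρ σ ▸ mem_insert_of_mem hi))
    obtain ⟨h₂, hh₂, hbd₂⟩ := ih hρs' hsum fun τ hτ hp => by
      rw [map_add, Pi.add_apply, hbd₁ τ hτ hp, add_comm, hsplit τ hτ hp]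
    refine ⟨subCone l h₁ h₂, hh₁.subCone hls hh₂, forall_subset_insert.2 fun τ hτ => ⟨?_, ?_⟩⟩
    · intro hp
      rw [boundary_subCone hl hτ, hbd₂ τ hτ hp, Pi.add_apply, add_sub_cancel_right]
    · rw [boundary_subCone_insert hl hτ, hcard hτ, add_left_inj]
      exact hbd₁ τ hτ

end Distributive

section Degree

variable {ι : Type*} [DecidableEq ι]

lemma sum_degree_insert_single_erase_lt {s : Finset (ι →₀ ℕ)} {e : ι →₀ ℕ} (hes : e ∈ s)
    (he : 1 < e.degree) (a : ι) :
    ∑ f ∈ insert (.single a 1) (s.erase e), f.degree < ∑ f ∈ s, f.degree := by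
  rw [← add_sum_erase s _ hes]
  by_cases ha : .single a 1 ∈ s.erase e
  · rw [insert_eq_of_mem ha]
    omega
  · rw [sum_insert ha, Finsupp.degree_single]
    omega

lemma sum_degree_image_tsub_single_lt {s : Finset (ι →₀ ℕ)} {e : ι →₀ ℕ} (hes : e ∈ s) {a : ι}
    (ha : e a ≠ 0) : ∑ f ∈ s.image (· - .single a 1), f.degree < ∑ f ∈ s, f.degree := by
  refine (sum_image_le_of_nonneg fun _ _ => Nat.zero_le _).trans_lt
    (sum_lt_sum (fun f _ => Finsupp.degree_mono tsub_le_self) ⟨e, hes, ?_⟩)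
  have hle : Finsupp.single a 1 ≤ e := by simpa [Nat.one_le_iff_ne_zero] using ha
  have hdeg := congrArg Finsupp.degree (add_tsub_cancel_of_le hle)
  rw [map_add, Finsupp.degree_single] at hdeg
  omega

end Degree

lemma isSMulRegular_quotient_of_sup_of_colon {A : Type*} [CommRing A] {I J : Ideal A} {a b : A}
    (hsup : IsSMulRegular (A ⧸ I ⊔ Ideal.span {a}) b) (hcolon : IsSMulRegular (A ⧸ J) b)
    (hJ : ∀ x, a * x ∈ I ↔ x ∈ J) : IsSMulRegular (A ⧸ I) b := by
  rw [isSMulRegular_quotient_iff_mem_of_smul_mem]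
  intro f hf
  obtain ⟨x, hx, y, hy, rfl⟩ := Submodule.mem_sup.1 <|
    mem_of_isSMulRegular_quotient_of_smul_mem hsup (Ideal.mem_sup_left hf)
  obtain ⟨g, rfl⟩ := Ideal.mem_span_singleton.1 hy
  rw [smul_eq_mul, mul_add, Submodule.add_mem_iff_right _ (Ideal.mul_mem_left _ _ hx),
    mul_left_comm, hJ] at hf
  exact add_mem hx ((hJ g).2 (mem_of_isSMulRegular_quotient_of_smul_mem hcolon hf))

section RegularFamily

variable {A ι : Type*} [CommRing A] {z : ι → A} {N : ℕ}

/-- Any `N` members of the family `z` form a weakly regular sequence, in every order. -/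
def IsRegularFamily (z : ι → A) (N : ℕ) : Prop :=
  ∀ (F : Finset ι) (t : ι), #F < N → t ∉ F → IsSMulRegular (A ⧸ Ideal.span (z '' F)) (z t)

/-- The monomial with exponent vector `e` in the elements `z i`. -/
def monomialOf (z : ι → A) (e : ι →₀ ℕ) : A := e.prod fun i a => z i ^ a

lemma monomialOf_zero : monomialOf z 0 = 1 := Finsupp.prod_zero_index

lemma monomialOf_single (i : ι) : monomialOf z (.single i 1) = z i := by
  simp [monomialOf]

lemma monomialOf_add (e f : ι →₀ ℕ) :
    monomialOf z (e + f) = monomialOf z e * monomialOf z f := by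
  classical
  exact Finsupp.prod_add_index' (fun _ => pow_zero _) fun _ => pow_add _

lemma monomialOf_dvd {e f : ι →₀ ℕ} (h : e ≤ f) : monomialOf z e ∣ monomialOf z f :=
  ⟨monomialOf z (f - e), by rw [← monomialOf_add, add_tsub_cancel_of_le h]⟩

lemma monomialOf_mul_tsub (e f : ι →₀ ℕ) :
    monomialOf z f * monomialOf z (e - f) = monomialOf z (f ⊔ e) := by
  rw [← monomialOf_add]
  congr 1
  ext i
  simp [add_tsub_eq_max]

/-- The ideal generated by the monomials in `z` with exponent vectors in `s`. -/
def monomialIdealOf (z : ι → A) (s : Finset (ι →₀ ℕ)) : Ideal A :=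
  Ideal.span (monomialOf z '' s)

lemma monomialOf_mem_monomialIdealOf {s : Finset (ι →₀ ℕ)} {e : ι →₀ ℕ} (he : e ∈ s) :
    monomialOf z e ∈ monomialIdealOf z s :=
  Ideal.subset_span ⟨e, he, rfl⟩

lemma monomialIdealOf_le {s : Finset (ι →₀ ℕ)} {I : Ideal A} :
    monomialIdealOf z s ≤ I ↔ ∀ e ∈ s, monomialOf z e ∈ I := by
  simp [monomialIdealOf, Ideal.span_le, Set.subset_def]

section Colon

variable [DecidableEq ι]

lemma monomialOf_mul_mem_of_mem_image_tsub {s : Finset (ι →₀ ℕ)} {u : ι →₀ ℕ} {f : A}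
    (hf : f ∈ monomialIdealOf z (s.image (· - u))) :
    monomialOf z u * f ∈ monomialIdealOf z s := by
  suffices monomialIdealOf z (s.image (· - u)) ≤
      Submodule.comap (LinearMap.mulLeft A (monomialOf z u)) (monomialIdealOf z s) from this hf
  rw [monomialIdealOf_le]
  simp only [mem_image, forall_exists_index, and_imp, forall_apply_eq_imp_iff₂]
  intro e he
  rw [Submodule.mem_comap, LinearMap.mulLeft_apply, monomialOf_mul_tsub]
  exact Ideal.mem_of_dvd _ (monomialOf_dvd le_sup_right) (monomialOf_mem_monomialIdealOf he)

/-- Colon by a single element of the family: the generators divisible by `z t` lose one factor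
`z t`, and those not divisible by it do not notice because `z t` is regular modulo them. -/
lemma mem_image_tsub_single_of_mul_mem {s : Finset (ι →₀ ℕ)} {t : ι} {f : A}
    (ht : IsSMulRegular (A ⧸ monomialIdealOf z {e ∈ s | e t = 0}) (z t))
    (hf : z t * f ∈ monomialIdealOf z s) :
    f ∈ monomialIdealOf z (s.image (· - .single t 1)) := by
  set I := monomialIdealOf z {e ∈ s | e t = 0}
  set J := monomialIdealOf z (s.image (· - .single t 1))
  have hIJ : I ≤ J := monomialIdealOf_le.2 fun e he => by
    obtain ⟨hes, het⟩ := mem_filter.1 he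
    refine monomialOf_mem_monomialIdealOf (mem_image.2 ⟨e, hes, ?_⟩)
    ext i
    obtain rfl | hi := eq_or_ne t i <;> simp_all
  have hs : monomialIdealOf z s ≤ I ⊔ Ideal.span {z t} * J := monomialIdealOf_le.2 fun e he => by
    by_cases het : e t = 0
    · exact Ideal.mem_sup_left (monomialOf_mem_monomialIdealOf (mem_filter.2 ⟨he, het⟩))
    · have hle : Finsupp.single t 1 ≤ e := by simpa [Nat.one_le_iff_ne_zero] using het
      rw [← add_tsub_cancel_of_le hle, monomialOf_add, monomialOf_single]
      exact Ideal.mem_sup_right (Ideal.mul_mem_mul (Ideal.mem_span_singleton_self _)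
        (monomialOf_mem_monomialIdealOf (mem_image_of_mem _ he)))
  obtain ⟨x, hx, y, hy, hxy⟩ := Submodule.mem_sup.1 (hs hf)
  obtain ⟨g, hg, rfl⟩ := Ideal.mem_span_singleton_mul.1 hy
  have hfg : f - g ∈ I := mem_of_isSMulRegular_quotient_of_smul_mem ht (by
    rwa [smul_eq_mul, mul_sub, ← hxy, add_sub_cancel_right])
  simpa using add_mem (hIJ hfg) hg

lemma monomialIdealOf_image_single (F : Finset ι) :
    monomialIdealOf z (F.image (.single · 1)) = Ideal.span (z '' F) := by
  simp [monomialIdealOf, Set.image_image, monomialOf_single]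

lemma monomialIdealOf_sup_span_singleton {s : Finset (ι →₀ ℕ)} {e : ι →₀ ℕ} (he : e ∈ s) {a : ι}
    (ha : e a ≠ 0) : monomialIdealOf z s ⊔ Ideal.span {z a} =
      monomialIdealOf z (insert (.single a 1) (s.erase e)) := by
  have hae : Finsupp.single a 1 ≤ e := by simpa [Nat.one_le_iff_ne_zero] using ha
  rw [← monomialOf_single (z := z) a]
  apply le_antisymm
  · refine sup_le (monomialIdealOf_le.2 fun f hf => ?_) ?_
    · obtain rfl | hfe := eq_or_ne f e
      · exact Ideal.mem_of_dvd _ (monomialOf_dvd hae)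
          (monomialOf_mem_monomialIdealOf (mem_insert_self _ _))
      · exact monomialOf_mem_monomialIdealOf (mem_insert_of_mem (mem_erase.2 ⟨hfe, hf⟩))
    · rw [Ideal.span_singleton_le_iff_mem]
      exact monomialOf_mem_monomialIdealOf (mem_insert_self _ _)
  · refine monomialIdealOf_le.2 (forall_mem_insert _ _ _ |>.2 ⟨?_, fun f hf => ?_⟩)
    · exact Ideal.mem_sup_right (Ideal.mem_span_singleton_self _)
    · exact Ideal.mem_sup_left (monomialOf_mem_monomialIdealOf (mem_of_mem_erase hf))

end Colon

namespace IsRegularFamily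

lemma isSMulRegular_of_degree_le_one (hz : IsRegularFamily z N) {s : Finset (ι →₀ ℕ)}
    (hs : #s < N) {t : ι} (ht : ∀ e ∈ s, e t = 0) (hdeg : ∀ e ∈ s, e.degree ≤ 1) :
    IsSMulRegular (A ⧸ monomialIdealOf z s) (z t) := by
  classical
  by_cases h0 : 0 ∈ s
  · have htop : monomialIdealOf z s = ⊤ := (Ideal.eq_top_iff_one _).2 <| by
      simpa only [monomialOf_zero] using monomialOf_mem_monomialIdealOf (z := z) h0
    exact (isSMulRegular_quotient_iff_mem_of_smul_mem _ _).2 fun _ _ => htop ▸ Submodule.mem_top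
  · have hs' : (s : Set (ι →₀ ℕ)) ⊆ (fun i => .single i 1) '' Set.univ := fun e he => by
      have he0 : e.degree ≠ 0 := fun h => h0 ((Finsupp.degree_eq_zero_iff e).1 h ▸ he)
      rw [Set.image_univ, Finsupp.range_single_one]
      exact le_antisymm (hdeg e he) (Nat.pos_of_ne_zero he0)
    obtain ⟨F, -, rfl⟩ := subset_set_image_iff.1 hs'
    rw [card_image_of_injective _ (Finsupp.single_left_injective one_ne_zero)] at hs
    rw [monomialIdealOf_image_single]
    exact hz F t hs fun htF => by simpa using ht _ (mem_image_of_mem _ htF)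

/-- Induction on the total degree of the generators: if `z a` properly divides some generator, then
both adding `z a` to the ideal and taking the colon by `z a` lower the total degree. -/
theorem isSMulRegular_quotient_monomialIdealOf (hz : IsRegularFamily z N)
    {s : Finset (ι →₀ ℕ)} (hs : #s < N) {t : ι} (ht : ∀ e ∈ s, e t = 0) :
    IsSMulRegular (A ⧸ monomialIdealOf z s) (z t) := by
  classical
  induction hd : ∑ e ∈ s, e.degree using Nat.strong_induction_on generalizing s t with
  | _ d ih =>
  subst hd
  by_cases! hdeg : ∀ e ∈ s, e.degree ≤ 1
  · exact hz.isSMulRegular_of_degree_le_one hs ht hdeg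
  obtain ⟨e, hes, he⟩ := hdeg
  obtain ⟨a, ha⟩ : ∃ a, e a ≠ 0 := by
    by_contra! h
    simp [Finsupp.degree_apply, h] at he
  have hta : t ≠ a := fun h => ha (h ▸ ht e hes)
  refine isSMulRegular_quotient_of_sup_of_colon (a := z a)
    (J := monomialIdealOf z (s.image (· - .single a 1))) ?_ ?_ fun x => ⟨fun hx => ?_, fun hx => ?_⟩
  · rw [monomialIdealOf_sup_span_singleton hes ha]
    refine ih _ (sum_degree_insert_single_erase_lt hes he a)
      ((card_insert_le _ _).trans_lt (by rwa [card_erase_add_one hes])) ?_ rfl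
    simpa [hta] using fun e' _ he' => ht e' he'
  · refine ih _ (sum_degree_image_tsub_single_lt hes ha) (card_image_le.trans_lt hs) ?_ rfl
    simpa using fun e' he' => by simp [ht e' he']
  · refine mem_image_tsub_single_of_mul_mem (ih _ ?_ ((card_filter_le _ _).trans_lt hs) ?_ rfl) hx
    · exact sum_lt_sum_of_subset (filter_subset _ _) hes (by simp [ha]) (by omega) (by simp)
    · simp
  · simpa only [monomialOf_single] using monomialOf_mul_mem_of_mem_image_tsub hx

theorem mem_monomialIdealOf_image_tsub_iff [DecidableEq ι] (hz : IsRegularFamily z N)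
    {s : Finset (ι →₀ ℕ)} (hs : #s < N) {u : ι →₀ ℕ} {f : A} :
    f ∈ monomialIdealOf z (s.image (· - u)) ↔ monomialOf z u * f ∈ monomialIdealOf z s := by
  refine ⟨monomialOf_mul_mem_of_mem_image_tsub, ?_⟩
  obtain ⟨w, rfl⟩ := Multiset.toFinsupp.surjective u
  induction w using Multiset.induction generalizing s with
  | empty => simp [monomialOf_zero]
  | cons t w ih =>
    intro hf
    rw [← Multiset.singleton_add, map_add, Multiset.toFinsupp_singleton] at hf ⊢
    rw [monomialOf_add, monomialOf_single, mul_assoc] at hf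
    have ht := hz.isSMulRegular_quotient_monomialIdealOf (s := {e ∈ s | e t = 0}) (t := t)
      ((card_filter_le _ _).trans_lt hs) fun e he => (mem_filter.1 he).2
    simpa only [image_image, Function.comp_def, tsub_tsub] using
      ih (card_image_le.trans_lt hs) (mem_image_tsub_single_of_mul_mem ht hf)

lemma monomialOf_sup_dvd (hz : IsRegularFamily z N) (hN : 1 < N) {e f : ι →₀ ℕ} {x : A}
    (he : monomialOf z e ∣ x) (hf : monomialOf z f ∣ x) : monomialOf z (e ⊔ f) ∣ x := by
  classical
  obtain ⟨y, rfl⟩ := he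
  rw [← monomialOf_mul_tsub]
  refine mul_dvd_mul_left _ ?_
  have hy := (hz.mem_monomialIdealOf_image_tsub_iff (s := {f}) (by simpa)).2
    (Ideal.mem_of_dvd _ hf (monomialOf_mem_monomialIdealOf (mem_singleton_self f)))
  simpa [monomialIdealOf, Ideal.mem_span_singleton] using hy

lemma monomialOf_finset_sup_dvd_iff (hz : IsRegularFamily z N) {κ : Type*} {e : κ → ι →₀ ℕ}
    {σ : Finset κ} (hσ : #σ ≤ N) {x : A} :
    monomialOf z (σ.sup e) ∣ x ↔ ∀ i ∈ σ, monomialOf z (e i) ∣ x := by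
  classical
  refine ⟨fun h i hi => (monomialOf_dvd (le_sup hi)).trans h, fun h => ?_⟩
  induction σ using Finset.induction with
  | empty => simp [monomialOf_zero, bot_eq_zero]
  | insert i σ hi ih =>
    rw [card_insert_of_notMem hi] at hσ
    rw [forall_mem_insert] at h
    obtain rfl | hne := σ.eq_empty_or_nonempty
    · simpa using h.1
    · rw [sup_insert]
      exact hz.monomialOf_sup_dvd (by have := hne.card_pos; omega) h.1 (ih (by omega) h.2)

theorem isDistributiveFamily (hz : IsRegularFamily z N) {κ : Type*} [Fintype κ]
    (e : κ → ι →₀ ℕ) (hN : Fintype.card κ ≤ N) :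
    IsDistributiveFamily fun i => Ideal.span {monomialOf z (e i)} := by
  classical
  rintro σ s hσs x ⟨hxσ, hxs⟩
  obtain rfl | hσ := σ.eq_empty_or_nonempty
  · simpa using hxs
  have hs : #(s.image e) < N := by
    have := card_union_of_disjoint hσs
    have := (σ ∪ s).card_le_univ
    have := hσ.card_pos
    have := card_image_le (s := s) (f := e)
    omega
  have hx_dvd : monomialOf z (σ.sup e) ∣ x := by
    rw [hz.monomialOf_finset_sup_dvd_iff (by have := σ.card_le_univ; omega)]
    simpa [Ideal.mem_span_singleton] using hxσ
  obtain ⟨y, rfl⟩ := hx_dvd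
  have hy : y ∈ monomialIdealOf z ((s.image e).image (· - σ.sup e)) := by
    rw [hz.mem_monomialIdealOf_image_tsub_iff hs]
    refine (iSup₂_le fun j hj => ?_ : ⨆ j ∈ s, Ideal.span {monomialOf z (e j)} ≤ _) hxs
    rw [Ideal.span_singleton_le_iff_mem]
    exact monomialOf_mem_monomialIdealOf (mem_image_of_mem e hj)
  suffices monomialIdealOf z ((s.image e).image (· - σ.sup e)) ≤
      Submodule.comap (LinearMap.mulLeft A (monomialOf z (σ.sup e)))
        (⨆ j ∈ s, (⨅ i ∈ σ, Ideal.span {monomialOf z (e i)}) ⊓ Ideal.span {monomialOf z (e j)})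
    from this hy
  rw [monomialIdealOf_le, forall_mem_image, forall_mem_image]
  intro j hj
  rw [Submodule.mem_comap, LinearMap.mulLeft_apply, monomialOf_mul_tsub]
  refine Submodule.mem_iSup_of_mem j (Submodule.mem_iSup_of_mem hj ⟨?_, ?_⟩)
  · simp only [SetLike.mem_coe, Submodule.mem_iInf, Ideal.mem_span_singleton]
    exact fun i hi => monomialOf_dvd (le_sup_of_le_left (le_sup hi))
  · exact Ideal.mem_span_singleton.2 (monomialOf_dvd le_sup_right)

end IsRegularFamily

end RegularFamily

section LinearForms

open MvPolynomial

lemma isSMulRegular_quotient_span_X_image {R τ : Type*} [CommRing R] {s : Set τ} {t : τ}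
    (ht : t ∉ s) :
    IsSMulRegular (MvPolynomial τ R ⧸ Ideal.span (X '' s : Set (MvPolynomial τ R)))
      (X t : MvPolynomial τ R) := by
  rw [isSMulRegular_quotient_iff_mem_of_smul_mem]
  intro f hf
  rw [smul_eq_mul, mem_ideal_span_X_image] at hf
  rw [mem_ideal_span_X_image]
  intro d hd
  obtain ⟨i, his, hi⟩ := hf (.single t 1 + d) (by
    rwa [mem_support_iff, coeff_X_mul, ← mem_support_iff])
  have hti : t ≠ i := fun h => ht (h ▸ his)
  exact ⟨i, his, by simpa [hti] using hi⟩

variable {K σ ι : Type*} [Field K]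

theorem exists_algEquiv_apply_eq_X {v : ι → MvPolynomial σ K} (hv : ∀ i, (v i).IsHomogeneous 1)
    (hli : LinearIndependent K v) :
    ∃ (B : Set (σ →₀ K)) (φ : MvPolynomial σ K ≃ₐ[K] MvPolynomial B K) (j : ι ↪ B),
      ∀ i, φ (v i) = X (j i) := by
  let ψ : SymmetricAlgebra K (σ →₀ K) ≃ₐ[K] MvPolynomial σ K :=
    SymmetricAlgebra.equivMvPolynomial Finsupp.basisSingleOne
  let linearForm : (σ →₀ K) →ₗ[K] MvPolynomial σ K :=
    ψ.toLinearMap ∘ₗ SymmetricAlgebra.ι K (σ →₀ K)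
  have hform : linearForm = Finsupp.linearCombination K X :=
    Finsupp.basisSingleOne.ext fun i => by
      rw [Finsupp.coe_basisSingleOne, Finsupp.linearCombination_single, one_smul,
        ← Finsupp.coe_basisSingleOne]
      exact SymmetricAlgebra.equivMvPolynomial_ι_apply _ i
  have hvrange (i : ι) : ∃ u, linearForm u = v i := by
    rw [← LinearMap.mem_range, hform, Finsupp.range_linearCombination,
      ← homogeneousSubmodule_one_eq_span_X]
    exact hv i
  choose u hu using hvrange
  have hui : LinearIndependent K u := .of_comp linearForm (by rwa [Function.comp_def, funext hu])
  let b := Module.Basis.extend hui.linearIndepOn_id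
  let j (i : ι) : hui.linearIndepOn_id.extend (Set.subset_univ _) :=
    ⟨u i, hui.linearIndepOn_id.subset_extend _ ⟨i, rfl⟩⟩
  refine ⟨_, ψ.symm.trans (SymmetricAlgebra.equivMvPolynomial b),
    ⟨j, fun i i' h => hui.injective (congrArg Subtype.val h)⟩, fun i => ?_⟩
  have hb : b (j i) = u i := Module.Basis.extend_apply_self _ _
  rw [← hu i, AlgEquiv.trans_apply]
  simp only [linearForm, LinearMap.comp_apply, AlgEquiv.toLinearMap_apply,
    AlgEquiv.symm_apply_apply, ← hb, SymmetricAlgebra.equivMvPolynomial_ι_apply]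
  rfl

lemma isSMulRegular_quotient_span_image_of_linearIndependent {v : ι → MvPolynomial σ K}
    (hv : ∀ i, (v i).IsHomogeneous 1) (hli : LinearIndependent K v) {s : Set ι} {t : ι}
    (ht : t ∉ s) : IsSMulRegular (MvPolynomial σ K ⧸ Ideal.span (v '' s)) (v t) := by
  obtain ⟨B, φ, j, hj⟩ := exists_algEquiv_apply_eq_X hv hli
  have hmem (x) : φ x ∈ Ideal.span (X '' (j '' s)) ↔ x ∈ Ideal.span (v '' s) := by
    rw [← Ideal.comap_map_of_bijective φ φ.bijective (I := .span (v '' s)), Ideal.mem_comap,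
      Ideal.map_span, Set.image_image, Set.image_image, funext hj]
  have hX := isSMulRegular_quotient_span_X_image (R := K) (s := j '' s) (t := j t) (by simpa)
  rw [isSMulRegular_quotient_iff_mem_of_smul_mem] at hX ⊢
  intro f hf
  rw [smul_eq_mul, ← hmem, map_mul, hj] at hf
  exact (hmem f).1 (hX _ hf)

theorem isRegularFamily_of_linearIndepOn {z : ι → MvPolynomial σ K} {N : ℕ}
    (hz : ∀ i, (z i).IsHomogeneous 1) (hli : ∀ s : Finset ι, #s ≤ N → LinearIndepOn K z s) :
    IsRegularFamily z N := by
  classical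
  intro F t hF htF
  have hins := hli (insert t F) (by rwa [card_insert_of_notMem htF])
  have := isSMulRegular_quotient_span_image_of_linearIndependent
    (fun i => hz _) hins (s := Subtype.val ⁻¹' F) (t := ⟨t, by simp⟩) (by simpa using htF)
  rwa [← Set.image_image z Subtype.val, Subtype.image_preimage_coe,
    Set.inter_eq_right.2 (by simp)] at this

end LinearForms

lemma boundary_univ_single {κ M : Type*} [LinearOrder κ] [Fintype κ] [AddCommGroup M]
    (σ : Finset κ) (x : M) :
    boundary univ (Pi.single σ x) =
      ∑ i ∈ σ, Pi.single (σ.erase i) ((-1 : ℤ) ^ #{j ∈ σ | j < i} • x) := by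
  ext τ
  have hfaces : {i ∈ univ \ τ | insert i τ = σ} = {i ∈ σ | τ = σ.erase i} := by
    ext i
    simp only [mem_filter, mem_sdiff, mem_univ, true_and]
    constructor
    · rintro ⟨hi, rfl⟩
      exact ⟨mem_insert_self _ _, (erase_insert hi).symm⟩
    · rintro ⟨hi, rfl⟩
      exact ⟨notMem_erase _ _, insert_erase hi⟩
  simp_rw [boundary_apply, Finset.sum_apply, Pi.single_apply, smul_ite, smul_zero, ← sum_filter]
  rw [hfaces]
  refine sum_congr rfl fun i hi => ?_
  rw [(mem_filter.1 hi).2]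
  congr 3
  ext j
  simpa using fun hj _ => hj.ne

section Taylor

variable {k : Type} [Field k] {n m p : ℕ} {Q : Fin m → MvPolynomial (Fin n) k}
  {L : Finset (Fin m) → MvPolynomial (Fin n) k}
  {c : Finset (Fin m) → Fin m → MvPolynomial (Fin n) k}

/-- The map from the Taylor complex to the simplicial chains of the full simplex that sends the
basis element of `σ` to `L σ • σ`, the degree `p` chains being extended by zero. -/
noncomputable def toSimplicial (L : Finset (Fin m) → MvPolynomial (Fin n) k) (p : ℕ) :
    TaylorMod k n m p →ₗ[MvPolynomial (Fin n) k] (Finset (Fin m) → MvPolynomial (Fin n) k) :=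
  LinearMap.pi fun σ => if h : #σ = p then L σ • Finsupp.lapply ⟨σ, h⟩ else 0

lemma toSimplicial_apply (f : TaylorMod k n m p) {σ : Finset (Fin m)} (hσ : #σ = p) :
    toSimplicial L p f σ = L σ * f ⟨σ, hσ⟩ := by
  simp [toSimplicial, hσ]

lemma toSimplicial_single (σ : {σ : Finset (Fin m) // #σ = p}) (a : MvPolynomial (Fin n) k) :
    toSimplicial L p (.single σ a) = Pi.single σ.1 (L σ * a) := by
  ext1 τ
  by_cases hτ : #τ = p
  · obtain ⟨σ, hσ⟩ := σ
    rw [toSimplicial_apply _ hτ, Finsupp.single_apply, Pi.single_apply]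
    grind
  · have hne : τ ≠ σ.1 := by
      rintro rfl
      exact hτ σ.2
    simp [toSimplicial, hτ, hne]

lemma ext_of_toSimplicial (hL0 : ∀ σ, L σ ≠ 0) {f g : TaylorMod k n m p}
    (h : ∀ σ, #σ = p → toSimplicial L p f σ = toSimplicial L p g σ) : f = g := by
  ext1 ⟨σ, hσ⟩
  have hσ' := h σ hσ
  rw [toSimplicial_apply f hσ, toSimplicial_apply g hσ] at hσ'
  exact mul_left_cancel₀ (hL0 σ) hσ'

lemma exists_toSimplicial_eq {h : Finset (Fin m) → MvPolynomial (Fin n) k}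
    (hh : ∀ σ, #σ = p → L σ ∣ h σ) : ∃ f, ∀ σ, #σ = p → toSimplicial L p f σ = h σ := by
  choose w hw using hh
  refine ⟨Finsupp.equivFunOnFinite.symm fun σ => w σ.1 σ.2, fun σ hσ => ?_⟩
  rw [toSimplicial_apply _ hσ, hw σ hσ]
  rfl

lemma taylorD_single (σ : {σ : Finset (Fin m) // #σ = p}) (a : MvPolynomial (Fin n) k) :
    taylorD k n m c p (.single σ a) = a • ∑ i ∈ σ.1.attach,
      .single ⟨σ.1.erase i.1, by rw [card_erase_of_mem i.2, σ.2]⟩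
        ((-1) ^ #{j ∈ σ.1 | j < i.1} * c σ.1 i.1) := by
  rw [taylorD, Finsupp.lsum_single, LinearMap.toSpanSingleton_apply]

theorem toSimplicial_taylorD (hc : ∀ σ, ∀ i ∈ σ, c σ i * L (σ.erase i) = L σ)
    (f : TaylorMod k n m (p + 1)) :
    toSimplicial L p (taylorD k n m c (p + 1) f) = boundary univ (toSimplicial L (p + 1) f) := by
  induction f using Finsupp.induction_linear with
  | zero => simp
  | add f g hf hg => simp only [map_add, hf, hg]
  | single σ a =>
    rw [taylorD_single, map_smul, map_sum, smul_sum, toSimplicial_single, boundary_univ_single,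
      ← sum_attach σ.1]
    refine sum_congr rfl fun i _ => ?_
    rw [toSimplicial_single, ← Pi.single_smul, ← hc σ i i.2, zsmul_eq_mul]
    congr 1
    push_cast
    rw [smul_eq_mul]
    ring

lemma taylorD_taylorD (hL0 : ∀ σ, L σ ≠ 0) (hc : ∀ σ, ∀ i ∈ σ, c σ i * L (σ.erase i) = L σ)
    (f : TaylorMod k n m (p + 2)) :
    taylorD k n m c (p + 1) (taylorD k n m c (p + 2) f) = 0 := by
  refine ext_of_toSimplicial (p := p) hL0 fun τ _ => ?_
  calc toSimplicial L p (taylorD k n m c (p + 1) (taylorD k n m c (p + 2) f)) τ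
      = boundary univ (toSimplicial L (p + 1) (taylorD k n m c (p + 2) f)) τ :=
        congrFun (toSimplicial_taylorD hc _) τ
    _ = boundary univ (boundary univ (toSimplicial L (p + 2) f)) τ :=
        congrFun (congrArg (boundary univ) (toSimplicial_taylorD hc f)) τ
    _ = toSimplicial L p 0 τ := by
        rw [boundary_boundary (subset_univ τ), map_zero, Pi.zero_apply]

lemma isInterChain_span_singleton_iff (hL : ∀ σ x, L σ ∣ x ↔ ∀ i ∈ σ, Q i ∣ x)
    {h : Finset (Fin m) → MvPolynomial (Fin n) k} :
    IsInterChain (fun i => Ideal.span {Q i}) ∅ univ p h ↔ ∀ σ, #σ = p → L σ ∣ h σ := by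
  simp [IsInterChain, hL, Ideal.mem_span_singleton]

theorem ker_taylorD_le_range (hL : ∀ σ x, L σ ∣ x ↔ ∀ i ∈ σ, Q i ∣ x) (hL0 : ∀ σ, L σ ≠ 0)
    (hc : ∀ σ, ∀ i ∈ σ, c σ i * L (σ.erase i) = L σ)
    (hQ : IsDistributiveFamily fun i => Ideal.span {Q i}) :
    LinearMap.ker (taylorD k n m c (p + 1)) ≤ LinearMap.range (taylorD k n m c (p + 2)) := by
  intro f hf
  rw [LinearMap.mem_ker] at hf
  have hchain : IsInterChain (fun i => Ideal.span {Q i}) ∅ univ (p + 1)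
      (toSimplicial L (p + 1) f) := (isInterChain_span_singleton_iff hL).2 fun σ hσ =>
    Dvd.intro _ (toSimplicial_apply f hσ).symm
  have hcycle : boundary univ (toSimplicial L (p + 1) f) = 0 := by
    rw [← toSimplicial_taylorD hc, hf]
    exact map_zero _
  obtain ⟨h, hh, hbd⟩ := hQ.exists_boundary_eq (disjoint_empty_left _) hchain
    fun τ _ _ => congrFun hcycle τ
  obtain ⟨g, hg⟩ := exists_toSimplicial_eq ((isInterChain_span_singleton_iff hL).1 hh)
  refine ⟨g, ext_of_toSimplicial (p := p + 1) hL0 fun τ hτ => ?_⟩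
  calc toSimplicial L (p + 1) (taylorD k n m c (p + 2) g) τ
      = boundary univ (toSimplicial L (p + 2) g) τ := congrFun (toSimplicial_taylorD hc g) τ
    _ = boundary univ h τ := boundary_congr fun i hi =>
        hg _ (by rw [card_insert_of_notMem (mem_sdiff.1 hi).2, hτ])
    _ = toSimplicial L (p + 1) f τ := hbd τ (subset_univ τ) hτ

lemma mul_taylorAug (f : TaylorMod k n m 0) :
    L ∅ * taylorAug k n m f = toSimplicial L 0 f ∅ := by
  rw [toSimplicial_apply f card_empty]
  congr 1
  induction f using Finsupp.induction_linear with
  | zero => simp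
  | add f g hf hg => rw [map_add, hf, hg, Finsupp.add_apply]
  | single σ a =>
    obtain ⟨σ, hσ⟩ := σ
    obtain rfl := card_eq_zero.1 hσ
    simp [taylorAug]

lemma mul_taylorAug_taylorD (hc : ∀ σ, ∀ i ∈ σ, c σ i * L (σ.erase i) = L σ)
    (f : TaylorMod k n m 1) :
    L ∅ * taylorAug k n m (taylorD k n m c 1 f) = ∑ i, L {i} * f ⟨{i}, card_singleton i⟩ := by
  rw [mul_taylorAug, toSimplicial_taylorD hc, boundary_empty_apply]
  exact sum_congr rfl fun i _ => toSimplicial_apply f _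

lemma map_taylorAug_range_taylorD (hL : ∀ σ x, L σ ∣ x ↔ ∀ i ∈ σ, Q i ∣ x)
    (hL0 : ∀ σ, L σ ≠ 0) (hc : ∀ σ, ∀ i ∈ σ, c σ i * L (σ.erase i) = L σ) :
    Submodule.map (taylorAug k n m) (LinearMap.range (taylorD k n m c 1)) =
      Ideal.span (Set.range Q) := by
  apply le_antisymm
  · rintro _ ⟨_, ⟨f, rfl⟩, rfl⟩
    have hunit : IsUnit (L ∅) := isUnit_iff_dvd_one.2 ((hL ∅ 1).2 (by simp))
    rw [← Ideal.unit_mul_mem_iff_mem _ hunit, mul_taylorAug_taylorD hc]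
    refine sum_mem fun i _ => Ideal.mul_mem_right _ _ (Ideal.mem_of_dvd _ ?_
      (Ideal.subset_span ⟨i, rfl⟩))
    exact (hL {i} _).1 dvd_rfl i (mem_singleton_self i)
  · refine Ideal.span_le.2 (Set.range_subset_iff.2 fun i => ?_)
    obtain ⟨a, ha⟩ : L {i} ∣ Q i := (hL {i} _).2 (by simp)
    refine ⟨_, ⟨.single ⟨{i}, card_singleton i⟩ (L ∅ * a), rfl⟩, mul_left_cancel₀ (hL0 ∅) ?_⟩
    rw [mul_taylorAug_taylorD hc, sum_eq_single i]
    · rw [Finsupp.single_eq_same, ha, mul_left_comm]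
    · intro j _ hji
      rw [Finsupp.single_apply, if_neg, mul_zero]
      simpa using hji.symm
    · simp

theorem isTaylorResolution_of_isDistributiveFamily (hQ0 : ∀ i, Q i ≠ 0)
    (hL : ∀ σ x, L σ ∣ x ↔ ∀ i ∈ σ, Q i ∣ x)
    (hc : ∀ σ, ∀ i ∈ σ, c σ i * L (σ.erase i) = L σ)
    (hQ : IsDistributiveFamily fun i => Ideal.span {Q i}) : IsTaylorResolution k n m Q c := by
  have hL0 (σ) : L σ ≠ 0 := ne_zero_of_dvd_ne_zero (prod_ne_zero_iff.2 fun i _ => hQ0 i)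
    ((hL σ _).2 fun i hi => dvd_prod_of_mem Q hi)
  refine ⟨fun p hp => ?_, map_taylorAug_range_taylorD hL hL0 hc⟩
  obtain ⟨q, rfl⟩ := Nat.exists_eq_add_of_le' hp
  refine le_antisymm (ker_taylorD_le_range hL hL0 hc hQ) ?_
  rintro _ ⟨f, rfl⟩
  exact taylorD_taylorD hL0 hc f

end Taylor

theorem taylor_resolution_of_generic_linear_products_general (k : Type) [Field k] (n m : ℕ)
    (Q : Fin m → MvPolynomial (Fin n) k)
    (L : Finset (Fin m) → MvPolynomial (Fin n) k)
    (hLdvd : ∀ σ, ∀ i ∈ σ, Q i ∣ L σ)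
    (hLlcm : ∀ σ t, (∀ i ∈ σ, Q i ∣ t) → L σ ∣ t)
    (c : Finset (Fin m) → Fin m → MvPolynomial (Fin n) k)
    (hc : ∀ σ, ∀ i ∈ σ, c σ i * L (σ.erase i) = L σ)
    (E : Set (MvPolynomial (Fin n) k))
    (hElin : ∀ z ∈ E, MvPolynomial.IsHomogeneous z 1)
    (hEgen : ∀ s : Finset (MvPolynomial (Fin n) k), ↑s ⊆ E → #s ≤ m →
      LinearIndepOn k id (s : Set (MvPolynomial (Fin n) k)))
    (hQprod : ∀ j, Q j ∈ Submonoid.closure E) :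
    IsTaylorResolution k n m Q c := by
  have hL (σ x) : L σ ∣ x ↔ ∀ i ∈ σ, Q i ∣ x :=
    ⟨fun h i hi => (hLdvd σ i hi).trans h, hLlcm σ x⟩
  have hQ0 (j : Fin m) : Q j ≠ 0 := by
    suffices hE : Submonoid.closure E ≤ nonZeroDivisors _ from
      nonZeroDivisors.ne_zero (hE (hQprod j))
    refine Submonoid.closure_le.2 fun z hz => mem_nonZeroDivisors_of_ne_zero ?_
    exact (hEgen {z} (by simpa) (card_singleton z ▸ j.pos)).ne_zero (by simp)
  have hreg : IsRegularFamily (Subtype.val : E → MvPolynomial (Fin n) k) m := by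
    refine isRegularFamily_of_linearIndepOn (fun z => hElin z z.2) fun s hs => ?_
    rw [linearIndepOn_iff_image Subtype.val_injective.injOn]
    simpa using hEgen (s.map (.subtype _)) (by simp) (by simpa using hs)
  have hexp (j : Fin m) : ∃ e, monomialOf (Subtype.val : E → MvPolynomial (Fin n) k) e = Q j := by
    obtain ⟨e, he⟩ := Submonoid.exists_finsupp_of_mem_closure_range (Subtype.val : E → _) (Q j)
      (by simpa using hQprod j)
    exact ⟨e, he.symm⟩
  choose e he using hexp
  refine isTaylorResolution_of_isDistributiveFamily hQ0 hL hc ?_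
  simpa only [he] using hreg.isDistributiveFamily e (Fintype.card_fin m).le

/-- Assume `k` algebraically closed and `m ≤ n`.  Let `E` be a generic
set of pairwise non-proportional homogeneous linear forms (any subset of at most `n`
elements is linearly independent) and suppose each `Q j` is a product of powers of
elements of `E`.  Then the Taylor complex of `𝒜` is a resolution of `S/I`. -/
theorem taylor_resolution_of_generic_linear_products (k : Type) [Field k] [IsAlgClosed k]
    (n m : ℕ) (hmn : m ≤ n)
    (Q : Fin m → MvPolynomial (Fin n) k)
    (hQ0 : ∀ i, Q i ≠ 0)
    (hQhom : ∀ i, ∃ d, (Q i).IsHomogeneous d)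
    (hQdvd : ∀ i j, i ≠ j → ¬ Q i ∣ Q j)
    (L : Finset (Fin m) → MvPolynomial (Fin n) k)
    (hLdvd : ∀ σ, ∀ i ∈ σ, Q i ∣ L σ)
    (hLlcm : ∀ σ t, (∀ i ∈ σ, Q i ∣ t) → L σ ∣ t)
    (c : Finset (Fin m) → Fin m → MvPolynomial (Fin n) k)
    (hc : ∀ σ, ∀ i ∈ σ, c σ i * L (σ.erase i) = L σ)
    (E : Finset (MvPolynomial (Fin n) k))
    (hElin : ∀ z ∈ E, MvPolynomial.IsHomogeneous z 1)
    (hE0 : ∀ z ∈ E, z ≠ 0)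
    (hEprop : ∀ z ∈ E, ∀ w ∈ E, z ≠ w → ∀ a : k, z ≠ a • w)
    (hEgen : ∀ s ⊆ E, s.card ≤ n →
      LinearIndependent k (fun z : s => (z : MvPolynomial (Fin n) k)))
    (hQprod : ∀ j, ∃ e : MvPolynomial (Fin n) k → ℕ, Q j = ∏ z ∈ E, z ^ e z) :
    IsTaylorResolution k n m Q c := by
  exact taylor_resolution_of_generic_linear_products_general k n m Q L hLdvd hLlcm c hc E hElin
    (fun s hs hsm => hEgen s (by exact_mod_cast hs) (hsm.trans hmn)) fun j =>
      let ⟨e, he⟩ := hQprod j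
      he ▸ prod_mem fun z hz => pow_mem (Submonoid.subset_closure hz) (e z)
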